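/- Let J(v) be the 9×9 matrix with polynomial entries in the coefficients (v_{-8},...,v_8) of a binary octic v, as given explicitly in the paper's Appendix (five ω-columns quadratic in v, four columns λ, φ_{-2}, φ_0, φ_2 linear in v). Then det J(v) is a nonzero scalar multiple of the discriminant of the binary octic v. -/

import Mathlib

open MvPolynomial

noncomputable section

variable {K : Type*} [CommRing K]

/-- The ω⁻⁴ column of J (common factor 9216 removed), from Appendix A. -/
def c0 (t : Fin 9 → K) : Fin 9 → K :=
  ![280*t 0*t 6 - 280*t 1*t 5,
    -245*t 2*t 5 + 70*t 0*t 7 + 175*t 1*t 6,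
    70*t 2*t 6 - 210*t 3*t 5 + 130*t 1*t 7 + 10*t 0*t 8,
    -175*t 4*t 5 - 35*t 3*t 6 + 35*t 1*t 8 + 175*t 2*t 7,
    84*t 2*t 8 + 196*t 3*t 7 - 140*t 5^2 - 140*t 4*t 6,
    -350*t 5*t 6 + 175*t 4*t 7 + 175*t 3*t 8,
    350*t 4*t 8 - 350*t 6^2,
    700*t 5*t 8 - 700*t 7*t 6,
    -1400*t 7^2 + 1400*t 8*t 6]

/-- The ω⁻² column of J (common factor 9216 removed). -/
def c1 (t : Fin 9 → K) : Fin 9 → K :=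
  ![-1400*t 0*t 5 + 1400*t 1*t 4,
    -385*t 0*t 6 - 840*t 1*t 5 + 1225*t 2*t 4,
    -280*t 2*t 5 + 1050*t 3*t 4 - 70*t 0*t 7 - 700*t 1*t 6,
    -910*t 2*t 6 + 280*t 3*t 5 + 875*t 4^2 - 240*t 1*t 7 - 5*t 0*t 8,
    1540*t 4*t 5 - 952*t 3*t 6 - 28*t 1*t 8 - 560*t 2*t 7,
    -105*t 2*t 8 - 1120*t 3*t 7 + 1400*t 5^2 - 175*t 4*t 6,
    2100*t 5*t 6 - 1750*t 4*t 7 - 350*t 3*t 8,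
    2450*t 6^2 - 1050*t 4*t 8 - 1400*t 5*t 7,
    -2800*t 5*t 8 + 2800*t 7*t 6]

/-- The ω⁰ column of J (common factor 9216 removed). -/
def c2 (t : Fin 9 → K) : Fin 9 → K :=
  ![-2800*t 1*t 3 + 2800*t 0*t 4,
    -2450*t 2*t 3 + 875*t 0*t 5 + 1575*t 1*t 4,
    210*t 0*t 6 - 2100*t 3^2 + 1540*t 1*t 5 + 350*t 2*t 4,
    1890*t 2*t 5 - 2625*t 3*t 4 + 35*t 0*t 7 + 700*t 1*t 6,
    1568*t 2*t 6 + 336*t 3*t 5 - 2100*t 4^2 + 192*t 1*t 7 + 4*t 0*t 8,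
    -2625*t 4*t 5 + 1890*t 3*t 6 + 35*t 1*t 8 + 700*t 2*t 7,
    210*t 2*t 8 + 1540*t 3*t 7 - 2100*t 5^2 + 350*t 4*t 6,
    -2450*t 5*t 6 + 1575*t 4*t 7 + 875*t 3*t 8,
    2800*t 4*t 8 - 2800*t 5*t 7]

/-- The ω² column of J (common factor 9216 removed). -/
def c3 (t : Fin 9 → K) : Fin 9 → K :=
  ![2800*t 2*t 1 - 2800*t 3*t 0,
    -1400*t 1*t 3 - 1050*t 0*t 4 + 2450*t 2^2,
    2100*t 2*t 3 - 350*t 0*t 5 - 1750*t 1*t 4,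
    -105*t 0*t 6 + 1400*t 3^2 - 1120*t 1*t 5 - 175*t 2*t 4,
    -952*t 2*t 5 + 1540*t 3*t 4 - 28*t 0*t 7 - 560*t 1*t 6,
    -910*t 2*t 6 + 280*t 3*t 5 + 875*t 4^2 - 240*t 1*t 7 - 5*t 0*t 8,
    1050*t 4*t 5 - 280*t 3*t 6 - 70*t 1*t 8 - 700*t 2*t 7,
    1225*t 4*t 6 - 385*t 2*t 8 - 840*t 3*t 7,
    1400*t 4*t 7 - 1400*t 3*t 8]

/-- The ω⁴ column of J (common factor 9216 removed). -/
def c4 (t : Fin 9 → K) : Fin 9 → K :=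
  ![1400*t 2*t 0 - 1400*t 1^2,
    -700*t 2*t 1 + 700*t 3*t 0,
    -350*t 2^2 + 350*t 0*t 4,
    -350*t 2*t 3 + 175*t 0*t 5 + 175*t 1*t 4,
    84*t 0*t 6 - 140*t 3^2 + 196*t 1*t 5 - 140*t 2*t 4,
    -35*t 2*t 5 - 175*t 3*t 4 + 35*t 0*t 7 + 175*t 1*t 6,
    70*t 2*t 6 - 210*t 3*t 5 + 130*t 1*t 7 + 10*t 0*t 8,
    70*t 1*t 8 - 245*t 3*t 6 + 175*t 2*t 7,
    -280*t 3*t 7 + 280*t 2*t 8]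

/-- The λ column of J. -/
def c5 (t : Fin 9 → K) : Fin 9 → K := t

/-- The φ₋₂ column of J. -/
def c6 (t : Fin 9 → K) : Fin 9 → K :=
  ![-16*t 1, -14*t 2, -12*t 3, -10*t 4, -8*t 5, -6*t 6, -4*t 7, -2*t 8, 0]

/-- The φ₀ column of J. -/
def c7 (t : Fin 9 → K) : Fin 9 → K :=
  ![16*t 0, 12*t 1, 8*t 2, 4*t 3, 0, -4*t 5, -8*t 6, -12*t 7, -16*t 8]

/-- The φ₂ column of J. -/
def c8 (t : Fin 9 → K) : Fin 9 → K :=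
  ![0, 2*t 0, 4*t 1, 6*t 2, 8*t 3, 10*t 4, 12*t 5, 14*t 6, 16*t 7]

/-- The 9×9 matrix J(T) from Appendix A of the paper (the factor 9216 = 2¹⁰3²
is restored on the five ω-columns). -/
def Jmat (t : Fin 9 → K) : Matrix (Fin 9) (Fin 9) K :=
  Matrix.of fun i j =>
    (![fun i' => (9216 : K) * c0 t i', fun i' => (9216 : K) * c1 t i',
       fun i' => (9216 : K) * c2 t i', fun i' => (9216 : K) * c3 t i',
       fun i' => (9216 : K) * c4 t i',
       c5 t, c6 t, c7 t, c8 t] j) i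

/-- The coefficient vector (binomial basis) of the binary octic
∏ᵢ (wᵢ·x - zᵢ·y), whose roots are [zᵢ : wᵢ]. -/
def coeffVec (z w : Fin 8 → ℂ) : Fin 9 → ℂ := fun k =>
  MvPolynomial.coeff (Finsupp.single (0 : Fin 2) (8 - (k : ℕ)) + Finsupp.single (1 : Fin 2) (k : ℕ))
    (∏ i : Fin 8, (MvPolynomial.C (w i) * X 0 - MvPolynomial.C (z i) * X 1))
    / (Nat.choose 8 k : ℂ)

/-!
Let `F = ∏ᵢ (wᵢ x - zᵢ y)` be the octic with binomial coefficients `v`. The columns of `J(v)` are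
octics: `λ` is `F` itself, and the others are tangent to the discriminant at `v`. Evaluated at a
root, `λ` vanishes, while every other column is divisible by `∂F/∂x`, the quotient being a
polynomial in the root whose coefficients depend only on `v`. Hence, if `E` takes an octic to its
leading coefficient and its values at the roots, then, apart from the first row and the `λ` column,
`E * J` is the product of a diagonal matrix, a Vandermonde matrix and a lower triangular matrix. The
diagonal entries multiply to the discriminant times a power of `v₀`. Comparing determinants and
cancelling that power of `v₀` and the Vandermonde determinant, which occurs in `det E` as well,
proves the identity for roots with independent indeterminate coordinates, and every other case is a
specialization.
-/

/-- The exponent of `X₀ ^ (n - k) * X₁ ^ k`. -/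
def binaryExponent {n : ℕ} (k : Fin (n + 1)) : Fin 2 →₀ ℕ :=
  Finsupp.single 0 (n - (k : ℕ)) + Finsupp.single 1 (k : ℕ)

/-- The binary form of degree `n` whose coefficients in the binomial basis are `v`. -/
def binaryForm {n : ℕ} (v : Fin (n + 1) → K) : MvPolynomial (Fin 2) K :=
  ∑ k : Fin (n + 1), C ((n.choose k : K) * v k) * (X 0 ^ (n - (k : ℕ)) * X 1 ^ (k : ℕ))

/-- The binary form `∏ᵢ (wᵢ x - zᵢ y)` with roots `[zᵢ : wᵢ]`. -/
def formOfRoots {n : ℕ} (z w : Fin n → K) : MvPolynomial (Fin 2) K :=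
  ∏ i, (C (w i) * X 0 - C (z i) * X 1)

section BinaryForm

variable {n : ℕ}

lemma degree_binaryExponent (k : Fin (n + 1)) : (binaryExponent k).degree = n := by
  simp only [binaryExponent, map_add, Finsupp.degree_single]
  omega

lemma binaryExponent_injective : Function.Injective (binaryExponent (n := n)) := fun k l h => by
  simpa [binaryExponent, Fin.ext_iff] using DFunLike.congr_fun h 1

lemma exists_binaryExponent_eq {d : Fin 2 →₀ ℕ} (hd : d.degree = n) :
    ∃ k : Fin (n + 1), binaryExponent k = d := by
  rw [Finsupp.degree_eq_sum, Fin.sum_univ_two] at hd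
  refine ⟨⟨d 1, by omega⟩, Finsupp.ext fun i => ?_⟩
  fin_cases i
  · simp [binaryExponent, ← hd]
  · simp [binaryExponent]

lemma binaryForm_eq_sum_monomial (v : Fin (n + 1) → K) :
    binaryForm v = ∑ k : Fin (n + 1), monomial (binaryExponent k) ((n.choose k : K) * v k) := by
  simp only [binaryForm, binaryExponent, X_pow_eq_monomial, monomial_mul, C_mul_monomial, mul_one]

lemma isHomogeneous_binaryForm (v : Fin (n + 1) → K) : (binaryForm v).IsHomogeneous n := by
  rw [binaryForm_eq_sum_monomial]
  exact IsHomogeneous.sum _ _ _ fun k _ => isHomogeneous_monomial _ (degree_binaryExponent k)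

lemma coeff_binaryForm (v : Fin (n + 1) → K) (k : Fin (n + 1)) :
    coeff (binaryExponent k) (binaryForm v) = (n.choose k : K) * v k := by
  simp [binaryForm_eq_sum_monomial, coeff_sum, coeff_monomial, binaryExponent_injective.eq_iff]

lemma binaryForm_eq_iff {p : MvPolynomial (Fin 2) K} (hp : p.IsHomogeneous n)
    {v : Fin (n + 1) → K} :
    binaryForm v = p ↔ ∀ k : Fin (n + 1), (n.choose k : K) * v k = coeff (binaryExponent k) p := by
  refine ⟨fun h k => by rw [← h, coeff_binaryForm], fun h => MvPolynomial.ext _ _ fun d => ?_⟩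
  by_cases hd : d.degree = n
  · obtain ⟨k, rfl⟩ := exists_binaryExponent_eq hd
    rw [coeff_binaryForm, h]
  · rw [(isHomogeneous_binaryForm v).coeff_eq_zero hd, hp.coeff_eq_zero hd]

lemma isUnit_choose [Algebra ℚ K] (k : Fin (n + 1)) : IsUnit (n.choose k : K) := by
  have h : (n.choose k : ℚ) ≠ 0 := by exact_mod_cast (Nat.choose_pos (Fin.is_le k)).ne'
  simpa using h.isUnit.map (algebraMap ℚ K)

lemma binaryForm_injective [Algebra ℚ K] :
    Function.Injective (binaryForm : (Fin (n + 1) → K) → MvPolynomial (Fin 2) K) :=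
  fun u v h => funext fun k => (isUnit_choose k).mul_left_cancel <| by
    rw [← coeff_binaryForm, h, coeff_binaryForm]

lemma exists_binaryForm_eq [Algebra ℚ K] {p : MvPolynomial (Fin 2) K} (hp : p.IsHomogeneous n) :
    ∃ v : Fin (n + 1) → K, binaryForm v = p := by
  choose v hv using fun k : Fin (n + 1) =>
    (isUnit_choose (K := K) k).dvd (a := coeff (binaryExponent k) p)
  exact ⟨v, (binaryForm_eq_iff hp).2 fun k => (hv k).symm⟩

lemma map_binaryForm {L : Type*} [CommRing L] (f : K →+* L) (v : Fin (n + 1) → K) :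
    map f (binaryForm v) = binaryForm (f ∘ v) := by
  simp [binaryForm]

lemma eval_binaryForm (v : Fin (n + 1) → K) (x y : K) :
    eval ![x, y] (binaryForm v) =
      ∑ k : Fin (n + 1), (n.choose k : K) * v k * (x ^ (n - (k : ℕ)) * y ^ (k : ℕ)) := by
  simp [binaryForm]

lemma eval_pderiv_binaryForm (v : Fin (n + 1) → K) (x y : K) :
    eval ![x, y] (pderiv 0 (binaryForm v)) = ∑ k : Fin (n + 1), (n.choose k : K) * v k *
      ((n - (k : ℕ) : ℕ) * x ^ (n - (k : ℕ) - 1) * y ^ (k : ℕ)) := by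
  simp [binaryForm, pderiv_X, mul_comm]

end BinaryForm

section FormOfRoots

variable {n : ℕ} (z w : Fin n → K)

lemma isHomogeneous_formOfRoots : (formOfRoots z w).IsHomogeneous n := by
  simpa [formOfRoots] using IsHomogeneous.prod Finset.univ _ (fun _ => 1) fun i _ =>
    ((isHomogeneous_X K 0).C_mul (w i)).sub ((isHomogeneous_X K 1).C_mul (z i))

lemma map_formOfRoots {L : Type*} [CommRing L] (f : K →+* L) :
    map f (formOfRoots z w) = formOfRoots (f ∘ z) (f ∘ w) := by
  simp [formOfRoots]

lemma eval_formOfRoots (x y : K) :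
    eval ![x, y] (formOfRoots z w) = ∏ i, (w i * x - z i * y) := by
  simp [formOfRoots]

lemma eval_root_formOfRoots (i : Fin n) : eval ![z i, w i] (formOfRoots z w) = 0 := by
  rw [eval_formOfRoots]
  exact Finset.prod_eq_zero (Finset.mem_univ i) (by ring)

lemma eval_root_pderiv_formOfRoots (i : Fin n) :
    eval ![z i, w i] (pderiv 0 (formOfRoots z w)) =
      w i * ∏ j ∈ {i}ᶜ, (z i * w j - z j * w i) := by
  rw [formOfRoots, Fintype.prod_eq_mul_prod_compl i, Derivation.leibniz]
  simp [pderiv_X, mul_comm]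

end FormOfRoots

/-- The matrix of the map from binary forms (binomial basis) of degree `n` to their leading
coefficient followed by their values at the points `(zᵢ, wᵢ)`. -/
def evalMatrix {n : ℕ} (z w : Fin n → K) : Matrix (Fin (n + 1)) (Fin (n + 1)) K :=
  Matrix.of <| Fin.cons (Pi.single 0 1) fun i k =>
    (n.choose k : K) * (z i ^ (n - (k : ℕ)) * w i ^ (k : ℕ))

section EvalMatrix

variable {n : ℕ} (z w : Fin n → K)

lemma evalMatrix_mul_zero (A : Matrix (Fin (n + 1)) (Fin (n + 1)) K) (j : Fin (n + 1)) :
    (evalMatrix z w * A) 0 j = A 0 j := by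
  simp [evalMatrix, Matrix.mul_apply, Pi.single_apply]

lemma evalMatrix_mul_succ (A : Matrix (Fin (n + 1)) (Fin (n + 1)) K) (i : Fin n)
    (j : Fin (n + 1)) :
    (evalMatrix z w * A) i.succ j = eval ![z i, w i] (binaryForm fun k => A k j) := by
  rw [eval_binaryForm, Matrix.mul_apply]
  exact Finset.sum_congr rfl fun k _ => mul_right_comm _ _ _

lemma det_evalMatrix :
    (evalMatrix z w).det =
      (∏ k : Fin n, (n.choose (k + 1) : K)) *
        ((∏ i, w i) * (Matrix.projVandermonde w z).det) := by
  rw [Matrix.det_succ_row_zero, Fin.sum_univ_succ, Finset.sum_eq_zero fun k _ => by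
    simp [evalMatrix], ← Matrix.det_mul_column, ← Matrix.det_mul_row]
  suffices h : (evalMatrix z w).submatrix Fin.succ Fin.succ = Matrix.of fun i (k : Fin n) =>
      (n.choose (k + 1) : K) * (w i * Matrix.projVandermonde w z i k) by
    simp [evalMatrix, ← h]
  ext i k
  simp only [evalMatrix, Matrix.submatrix_apply, Matrix.of_apply, Fin.cons_succ, Fin.val_succ,
    Matrix.projVandermonde_apply, Fin.val_rev, pow_succ']
  ring

end EvalMatrix

/-- The velocities, up to sign, with which the columns of `J` other than `λ` move a root `x` of the
octic `F` with binomial coefficients `v`: column `j` lists the coefficients of `x ^ (7 - k)`.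
For the `ω`-columns these come from the coefficients of `s ^ j` in the polarization quotient
`(F(s⁵, x³) - F(x)) / (s - x)`. The columns `φ₋₂`, `φ₀`, `φ₂` are the infinitesimal actions of
`-2x∂_y`, `2(x∂_x - y∂_y)`, `2y∂_x`. -/
def velocityMatrix (v : Fin 9 → K) : Matrix (Fin 8) (Fin 8) K :=
  Matrix.of
    ![![v 0, 0, 0, 0, 0, 0, 0, 0],
      ![8 * v 1, v 0, 0, 0, 0, 0, 0, 0],
      ![28 * v 2, 8 * v 1, v 0, 0, 0, 0, 0, 0],
      ![56 * v 3, 28 * v 2, 8 * v 1, v 0, 0, 0, 0, 0],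
      ![70 * v 4, 56 * v 3, 28 * v 2, 8 * v 1, v 0, 0, 0, 0],
      ![55 * v 5, 65 * v 4, 46 * v 3, 18 * v 2, 3 * v 1, 1, 0, 0],
      ![25 * v 6, 40 * v 5, 35 * v 4, 16 * v 3, 3 * v 2, 0, 1, 0],
      ![5 * v 7, 10 * v 6, 10 * v 5, 5 * v 4, v 3, 0, 0, 1]] *
  Matrix.diagonal ![-(35 * 9216), 35 * 9216, -(35 * 9216), 35 * 9216, -(35 * 9216), 2, 4, 2]

lemma det_velocityMatrix (v : Fin 9 → K) :
    (velocityMatrix v).det = -(16 * (35 * 9216) ^ 5) * v 0 ^ 5 := by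
  rw [velocityMatrix, Matrix.det_mul, Matrix.det_diagonal, Matrix.det_of_isLowerTriangular]
  · simp only [Fin.prod_univ_eight, Matrix.of_apply, Matrix.cons_val]
    ring
  · intro i j hij
    change i < j at hij
    fin_cases i <;> fin_cases j <;> first | rfl | exact absurd hij (by decide)

lemma eval_octic (v : Fin 9 → K) (x y : K) : eval ![x, y] (binaryForm v) =
    v 0 * x ^ 8 + 8 * v 1 * x ^ 7 * y + 28 * v 2 * x ^ 6 * y ^ 2 + 56 * v 3 * x ^ 5 * y ^ 3 +
      70 * v 4 * x ^ 4 * y ^ 4 + 56 * v 5 * x ^ 3 * y ^ 5 + 28 * v 6 * x ^ 2 * y ^ 6 +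
      8 * v 7 * x * y ^ 7 + v 8 * y ^ 8 := by
  rw [eval_binaryForm, Fin.sum_univ_castSucc, Fin.sum_univ_eight]
  simp only [Fin.castSucc_zero, Fin.castSucc_one, Fin.reduceCastSucc, Fin.reduceLast,
    Fin.coe_ofNat_eq_mod, Nat.reduceMod, Nat.reduceAdd, Nat.reduceSub, Nat.choose, Nat.cast_ofNat,
    Nat.cast_one]
  ring

lemma eval_pderiv_octic (v : Fin 9 → K) (x y : K) : eval ![x, y] (pderiv 0 (binaryForm v)) =
    8 * (v 0 * x ^ 7 + 7 * v 1 * x ^ 6 * y + 21 * v 2 * x ^ 5 * y ^ 2 + 35 * v 3 * x ^ 4 * y ^ 3 +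
      35 * v 4 * x ^ 3 * y ^ 4 + 21 * v 5 * x ^ 2 * y ^ 5 + 7 * v 6 * x * y ^ 6 +
      v 7 * y ^ 7) := by
  rw [eval_pderiv_binaryForm, Fin.sum_univ_castSucc, Fin.sum_univ_eight]
  simp only [Fin.castSucc_zero, Fin.castSucc_one, Fin.reduceCastSucc, Fin.reduceLast,
    Fin.coe_ofNat_eq_mod, Nat.reduceMod, Nat.reduceAdd, Nat.reduceSub, Nat.choose, Nat.cast_ofNat,
    Nat.cast_one, Nat.cast_zero]
  ring

lemma sum_velocityMatrix (v : Fin 9 → K) (x y : K) (j : Fin 8) :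
    ∑ k : Fin 8, y ^ (k : ℕ) * x ^ (k.rev : ℕ) * velocityMatrix v k j =
      x ^ 7 * velocityMatrix v 0 j + x ^ 6 * y * velocityMatrix v 1 j +
      x ^ 5 * y ^ 2 * velocityMatrix v 2 j + x ^ 4 * y ^ 3 * velocityMatrix v 3 j +
      x ^ 3 * y ^ 4 * velocityMatrix v 4 j + x ^ 2 * y ^ 5 * velocityMatrix v 5 j +
      x * y ^ 6 * velocityMatrix v 6 j + y ^ 7 * velocityMatrix v 7 j := by
  simp only [Fin.sum_univ_eight, Fin.val_rev, Fin.coe_ofNat_eq_mod, Nat.reduceMod, Nat.reduceAdd,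
    Nat.reduceSub]
  ring

lemma pow_mul_eval_Jmat (v : Fin 9 → K) {x y : K} (h : eval ![x, y] (binaryForm v) = 0)
    (j : Fin 8) :
    y ^ 6 * eval ![x, y] (binaryForm fun k => Jmat v k (Fin.succAbove 5 j)) =
      eval ![x, y] (pderiv 0 (binaryForm v)) *
        ∑ k : Fin 8, y ^ (k : ℕ) * x ^ (k.rev : ℕ) * velocityMatrix v k j := by
  -- On the `ω`-columns the multiplier of `h` is, up to sign and the same factor, the polarization
  -- quotient of `∂F/∂x` in place of `F`.
  rw [eval_octic] at h ⊢
  rw [eval_pderiv_octic, sum_velocityMatrix]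
  simp only [velocityMatrix, Matrix.mul_diagonal, Matrix.of_apply, Matrix.cons_val, Jmat]
  fin_cases j <;>
    simp only [Fin.succAbove, Fin.zero_eta, Fin.mk_one, Fin.reduceFinMk, Fin.castSucc_zero,
      Fin.castSucc_one, Fin.reduceCastSucc, Fin.reduceSucc, Fin.reduceLT, lt_self_iff_false,
      if_true, if_false, Matrix.cons_val, c0, c1, c2, c3, c4, c6, c7, c8]
  · linear_combination 2580480 * (5 * v 6 * y ^ 6 + 20 * v 5 * x * y ^ 5 +
      35 * v 4 * x ^ 2 * y ^ 4 + 35 * v 3 * x ^ 3 * y ^ 3 + 21 * v 2 * x ^ 4 * y ^ 2 +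
      7 * v 1 * x ^ 5 * y + v 0 * x ^ 6) * h
  · linear_combination -2580480 * y * (10 * v 5 * y ^ 5 + 30 * v 4 * x * y ^ 4 +
      35 * v 3 * x ^ 2 * y ^ 3 + 21 * v 2 * x ^ 3 * y ^ 2 + 7 * v 1 * x ^ 4 * y + v 0 * x ^ 5) * h
  · linear_combination 2580480 * y ^ 2 * (10 * v 4 * y ^ 4 + 25 * v 3 * x * y ^ 3 +
      21 * v 2 * x ^ 2 * y ^ 2 + 7 * v 1 * x ^ 3 * y + v 0 * x ^ 4) * h
  · linear_combination -2580480 * y ^ 3 * (5 * v 3 * y ^ 3 + 11 * v 2 * x * y ^ 2 +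
      7 * v 1 * x ^ 2 * y + v 0 * x ^ 3) * h
  · linear_combination 2580480 * y ^ 4 * (v 2 * y ^ 2 + 2 * v 1 * x * y + v 0 * x ^ 2) * h
  · linear_combination -16 * x * y ^ 5 * h
  · linear_combination -16 * y ^ 6 * h
  · ring

lemma prod_prod_Ioi_neg_one (n : ℕ) :
    ∏ i : Fin n, ∏ _j ∈ Finset.Ioi i, (-1 : K) = (-1) ^ n.choose 2 := by
  simp_rw [Finset.prod_const, Fin.card_Ioi, Finset.prod_pow_eq_pow_sum]
  rw [Fin.sum_univ_eq_sum_range fun i => n - 1 - i, Finset.sum_range_reflect fun i => i,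
    Finset.sum_range_id, Nat.choose_two_right]

lemma prod_prod_compl_eq_prod_sq {n : ℕ} (z w : Fin n → K) :
    ∏ i, ∏ j ∈ {i}ᶜ, (z i * w j - z j * w i) =
      (-1) ^ n.choose 2 * ∏ i, ∏ j ∈ Finset.Ioi i, (z i * w j - z j * w i) ^ 2 := by
  have h (i j : Fin n) : (z i * w j - z j * w i) * (z j * w i - z i * w j) =
    -1 * (z i * w j - z j * w i) ^ 2 := by ring
  rw [← Finset.prod_prod_Ioi_mul_eq_prod_prod_off_diag fun j i => z i * w j - z j * w i]
  simp_rw [h, Finset.prod_mul_distrib, prod_prod_Ioi_neg_one]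

section DetJ

variable {v : Fin 9 → K} {z w : Fin 8 → K}

lemma apply_zero_of_binaryForm_eq (h : binaryForm v = formOfRoots z w) : v 0 = ∏ i, w i := by
  have h' := congrArg (eval ![1, 0]) h
  simpa [eval_binaryForm, eval_formOfRoots, Fin.sum_univ_succ] using h'

lemma evalMatrix_mul_Jmat_lambda (h : binaryForm v = formOfRoots z w) (i : Fin 8) :
    (evalMatrix z w * Jmat v) i.succ 5 = 0 := by
  rw [evalMatrix_mul_succ, ← eval_root_formOfRoots z w i, ← h]
  rfl

lemma pow_mul_evalMatrix_mul_Jmat (h : binaryForm v = formOfRoots z w) (i j : Fin 8) :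
    w i ^ 6 * (evalMatrix z w * Jmat v) i.succ (Fin.succAbove 5 j) =
      (w i * ∏ l ∈ {i}ᶜ, (z i * w l - z l * w i)) *
        (Matrix.projVandermonde w z * velocityMatrix v) i j := by
  rw [evalMatrix_mul_succ, pow_mul_eval_Jmat v (by rw [h, eval_root_formOfRoots]), h,
    eval_root_pderiv_formOfRoots, Matrix.mul_apply]
  rfl

lemma det_evalMatrix_mul_Jmat (h : binaryForm v = formOfRoots z w) :
    (evalMatrix z w * Jmat v).det =
      -(v 0 * ((evalMatrix z w * Jmat v).submatrix Fin.succ (Fin.succAbove 5)).det) := by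
  rw [Matrix.det_succ_column _ 5, Fin.sum_univ_succ, Finset.sum_eq_zero fun i _ => by
    rw [evalMatrix_mul_Jmat_lambda h, mul_zero, zero_mul], evalMatrix_mul_zero,
    show Jmat v 0 5 = v 0 from rfl]
  norm_num

lemma prod_pow_mul_det_evalMatrix_mul_Jmat (h : binaryForm v = formOfRoots z w) :
    (∏ i, w i) ^ 6 * (evalMatrix z w * Jmat v).det =
      -(v 0 * (((∏ i, w i) * ∏ i, ∏ j ∈ {i}ᶜ, (z i * w j - z j * w i)) *
        (Matrix.projVandermonde w z * velocityMatrix v).det)) := by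
  rw [det_evalMatrix_mul_Jmat h, ← Finset.prod_pow, mul_neg, mul_left_comm,
    ← Finset.prod_mul_distrib, ← Matrix.det_mul_column, ← Matrix.det_mul_column]
  congr 3
  ext i j
  exact pow_mul_evalMatrix_mul_Jmat h i j

lemma det_Jmat_of_ne_zero [IsDomain K] [CharZero K] (h : binaryForm v = formOfRoots z w)
    (hw : ∀ i, w i ≠ 0) (hzw : (Matrix.projVandermonde w z).det ≠ 0) :
    (Jmat v).det =
      2 ^ 37 * 3 ^ 10 * 5 ^ 4 * ∏ i, ∏ j ∈ Finset.Ioi i, (z i * w j - z j * w i) ^ 2 := by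
  have hv : v 0 ≠ 0 := by
    rw [apply_zero_of_binaryForm_eq h]
    exact Finset.prod_ne_zero_iff.2 fun i _ => hw i
  have hchoose : ∏ k : Fin 8, (Nat.choose 8 (k + 1) : K) = 2 ^ 17 * 5 * 7 ^ 5 := by
    norm_num [Fin.prod_univ_eight, Nat.choose]
  have hdet := prod_pow_mul_det_evalMatrix_mul_Jmat h
  rw [Matrix.det_mul, Matrix.det_mul, det_evalMatrix, det_velocityMatrix,
    prod_prod_compl_eq_prod_sq, ← apply_zero_of_binaryForm_eq h, hchoose,
    (by decide : Even (Nat.choose 8 2)).neg_one_pow] at hdet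
  have hne : 2 ^ 17 * 5 * 7 ^ 5 * (v 0 ^ 7 * (Matrix.projVandermonde w z).det) ≠ 0 :=
    mul_ne_zero (by norm_num) (mul_ne_zero (pow_ne_zero 7 hv) hzw)
  apply mul_left_cancel₀ hne
  linear_combination hdet

end DetJ

lemma map_Jmat {L : Type*} [CommRing L] (f : K →+* L) (v : Fin 9 → K) :
    f.mapMatrix (Jmat v) = Jmat (f ∘ v) := by
  ext i j
  simp only [Jmat, RingHom.mapMatrix_apply, Matrix.map_apply, Matrix.of_apply]
  revert i
  fin_cases j <;>
    simp only [Fin.zero_eta, Fin.mk_one, Fin.reduceFinMk, Matrix.cons_val] <;>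
    simp only [c0, c1, c2, c3, c4, c5, c6, c7, c8, Fin.forall_fin_succ, IsEmpty.forall_iff,
      Matrix.cons_val_zero, Matrix.cons_val_succ, Function.comp_apply, map_mul, map_add, map_sub,
      map_neg, map_pow, map_ofNat f, map_zero, and_self]

lemma det_projVandermonde_X_ne_zero [IsDomain K] (n : ℕ) :
    (Matrix.projVandermonde (fun i : Fin n => (X (Sum.inr i) : MvPolynomial (Fin n ⊕ Fin n) K))
      fun i => X (Sum.inl i)).det ≠ 0 := by
  rw [Matrix.det_projVandermonde]
  refine Finset.prod_ne_zero_iff.2 fun i _ => Finset.prod_ne_zero_iff.2 fun j hj h => ?_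
  have hij : i ≠ j := (Finset.mem_Ioi.1 hj).ne
  simpa [hij] using congrArg (eval (Sum.elim (Pi.single i 1) (Pi.single j 1))) h

theorem detJ_is_multiple_of_discriminant_general [Algebra ℚ K] {v : Fin 9 → K} {z w : Fin 8 → K}
    (h : binaryForm v = formOfRoots z w) :
    (Jmat v).det =
      2 ^ 37 * 3 ^ 10 * 5 ^ 4 * ∏ i, ∏ j ∈ Finset.Ioi i, (z i * w j - z j * w i) ^ 2 := by
  let Z : Fin 8 → MvPolynomial (Fin 8 ⊕ Fin 8) ℚ := fun i => X (Sum.inl i)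
  let W : Fin 8 → MvPolynomial (Fin 8 ⊕ Fin 8) ℚ := fun i => X (Sum.inr i)
  let φ := eval₂Hom (algebraMap ℚ K) (Sum.elim z w)
  have hZ : φ ∘ Z = z := funext fun i => eval₂Hom_X' _ _ _
  have hW : φ ∘ W = w := funext fun i => eval₂Hom_X' _ _ _
  obtain ⟨V, hV⟩ := exists_binaryForm_eq (isHomogeneous_formOfRoots Z W)
  have hv : φ ∘ V = v := binaryForm_injective <| by
    rw [← map_binaryForm, hV, map_formOfRoots, hZ, hW, h]
  have hdet := det_Jmat_of_ne_zero hV (fun i => X_ne_zero _) (det_projVandermonde_X_ne_zero 8)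
  rw [← hv, ← map_Jmat, ← RingHom.map_det, hdet, ← hZ, ← hW]
  simp only [map_mul, map_pow, map_ofNat φ, map_prod, map_sub, Function.comp_apply]

lemma binaryForm_coeffVec (z w : Fin 8 → ℂ) :
    binaryForm (coeffVec z w) = formOfRoots z w :=
  (binaryForm_eq_iff (isHomogeneous_formOfRoots z w)).2 fun k =>
    mul_div_cancel₀ _ (isUnit_choose k).ne_zero

/-- det J(v) is a nonzero scalar multiple of the discriminant of
the binary octic v; the discriminant is expressed through the roots as
∏_{i<j} (zᵢwⱼ - zⱼwᵢ)². -/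
theorem detJ_is_multiple_of_discriminant :
    ∃ cst : ℂ, cst ≠ 0 ∧ ∀ z w : Fin 8 → ℂ,
      (Jmat (coeffVec z w)).det
        = cst * ∏ i : Fin 8, ∏ j ∈ Finset.Ioi i, (z i * w j - z j * w i) ^ 2 := by
  refine ⟨2 ^ 37 * 3 ^ 10 * 5 ^ 4, by norm_num, fun z w => ?_⟩
  exact detJ_is_multiple_of_discriminant_general (binaryForm_coeffVec z w)
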